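/- (Typing of ADT constructors) For every `i : Fin m` and every list `xs : List ZFSet` matching `sig i` relative to `A`, one has `c i xs ∈ A`. -/

import Mathlib

/-!
Matching is monotone in the carrier (`ADT.Matches.mono`), so `F` is monotone and, starting from
`f 0 = ∅`, the stages `f n` increase. A list has only finitely many entries, so if it matches
relative to `A`, the union of the stages, then all its self-referential entries already lie in a
common stage `f n` (`ADT.Matches.exists_stage`). Applying the constructor then gives an element
of `F (f n) = f (n + 1)`, hence of `A`.
-/

/-!
Context: ZFC via Mathlib's `ZFSet`; `(x, y)` is the Kuratowski pair `ZFSet.pair x y`.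
An ADT specification consists of `m : ℕ` and, for each `i : Fin m`, a list
`sig i : List (Option ZFSet)` of argument types of the `i`-th constructor
(`some S` is the fixed set `S`, `none` a self-reference to the ADT).
`F H` is the set of all `c i xs` with `xs` matching `sig i` relative to `H`
(it exists by replacement and union, so we take it together with its membership
characterization as a hypothesis), `f 0 = ∅`, `f (n+1) = F (f n)`, and
`A` satisfies `x ∈ A ↔ ∃ n, x ∈ f n`.
-/

namespace ADT

/-- Tuple encoding of lists of sets: `tup [] = ∅`, `tup (x :: xs) = (x, tup xs)`. -/
def tup : List ZFSet → ZFSet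
  | [] => ∅
  | x :: xs => x.pair (tup xs)

/-- `tag i`: the von Neumann natural `i` as a `ZFSet`. -/
def tag : ℕ → ZFSet
  | 0 => ∅
  | n + 1 => insert (tag n) (tag n)

/-- `xs` matches the signature `s` relative to the set `H`: the lists have equal length
and at each position `k`, `xs[k] ∈ S` if `s[k] = some S`, and `xs[k] ∈ H` if `s[k] = none`. -/
def Matches (H : ZFSet) : List ZFSet → List (Option ZFSet) → Prop :=
  List.Forall₂ (fun x o => match o with | some S => x ∈ S | none => x ∈ H)

/-- The `i`-th constructor applied to arguments `xs`: `c i xs = tup (tag i :: xs)`. -/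
def c {m : ℕ} (i : Fin m) (xs : List ZFSet) : ZFSet :=
  tup (tag i.val :: xs)

theorem Matches.mono {H K : ZFSet} (h : H ⊆ K) {xs : List ZFSet} {s : List (Option ZFSet)}
    (hx : Matches H xs s) : Matches K xs s := by
  refine List.Forall₂.imp ?_ hx
  rintro x (_ | S) hxo
  · exact h hxo
  · exact hxo

/-- Compactness of matching: since `xs` is finite, a match relative to the union of an
increasing sequence already takes place at some finite stage. -/
theorem Matches.exists_stage {f : ℕ → ZFSet} (hf : ∀ a b : ℕ, a ≤ b → f a ⊆ f b)
    {A : ZFSet} (hA : ∀ x : ZFSet, x ∈ A ↔ ∃ n : ℕ, x ∈ f n)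
    {xs : List ZFSet} {s : List (Option ZFSet)} (hx : Matches A xs s) :
    ∃ n : ℕ, Matches (f n) xs s := by
  unfold Matches at hx
  induction hx with
  | nil => exact ⟨0, List.Forall₂.nil⟩
  | @cons x o xs s hxo _ ih =>
    obtain ⟨n, hn⟩ := ih
    cases o with
    | some S => exact ⟨n, List.Forall₂.cons hxo hn⟩
    | none =>
      obtain ⟨k, hk⟩ := (hA x).1 hxo
      exact ⟨max k n, List.Forall₂.cons (hf _ _ (le_max_left k n) hk)
        (hn.mono (hf _ _ (le_max_right k n)))⟩

/-- (Typing of ADT constructors) For every `i : Fin m` and every list `xs` matching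
`sig i` relative to `A`, one has `c i xs ∈ A`. -/
theorem constructor_typing (m : ℕ) (sig : Fin m → List (Option ZFSet))
    (F : ZFSet → ZFSet)
    (hF : ∀ H x : ZFSet, x ∈ F H ↔ ∃ i : Fin m, ∃ xs : List ZFSet,
      Matches H xs (sig i) ∧ x = c i xs)
    (f : ℕ → ZFSet) (hf0 : f 0 = ∅) (hfs : ∀ n : ℕ, f (n + 1) = F (f n))
    (A : ZFSet) (hA : ∀ x : ZFSet, x ∈ A ↔ ∃ n : ℕ, x ∈ f n)
    (i : Fin m) (xs : List ZFSet) (hxs : Matches A xs (sig i)) :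
    c i xs ∈ A := by
  have hstep : ∀ n : ℕ, f n ⊆ f (n + 1) := by
    intro n
    induction n with
    | zero =>
      intro x hx
      rw [hf0] at hx
      exact absurd hx (ZFSet.notMem_empty x)
    | succ n ih =>
      intro x hx
      rw [hfs, hF] at hx
      rw [hfs (n + 1), hF]
      obtain ⟨j, ys, hys, rfl⟩ := hx
      exact ⟨j, ys, hys.mono ih, rfl⟩
  have hmono : ∀ a b : ℕ, a ≤ b → f a ⊆ f b := by
    intro a b hab
    induction hab with
    | refl => exact fun _ hx => hx
    | step _ ih => exact fun _ hx => hstep _ (ih hx)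
  obtain ⟨n, hn⟩ := hxs.exists_stage hmono hA
  refine (hA _).2 ⟨n + 1, ?_⟩
  rw [hfs, hF]
  exact ⟨i, xs, hn, rfl⟩

end ADT
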